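/- For any λ > 0 and μ > 0, the Model I penalized objective f and its smoothed DC approximation f_μ satisfy f_μ(x¹,…,x^k) ≤ f(x¹,…,x^k) ≤ f_μ(x¹,…,x^k) + m·k·(1 + λ/2)·μ·‖F‖² for all x¹,…,x^k ∈ ℝⁿ, where ‖F‖ = sup{‖q‖ : q ∈ F}. -/

import Mathlib

open scoped RealInnerProductSpace

/-- The support function `σ_F` of a set `F ⊆ ℝⁿ`. -/
noncomputable def suppF {n : ℕ} (F : Set (EuclideanSpace ℝ (Fin n)))
    (x : EuclideanSpace ℝ (Fin n)) : ℝ :=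
  sSup ((fun y => ⟪x, y⟫) '' F)

/-- Minimum of finitely many real numbers indexed by `Fin m`, `m ≥ 1`. -/
noncomputable def fmin {m : ℕ} (hm : 1 ≤ m) (α : Fin m → ℝ) : ℝ :=
  Finset.univ.inf' (Finset.univ_nonempty_iff.mpr ⟨⟨0, hm⟩⟩) α

/-- Maximum of finitely many real numbers indexed by `Fin m`, `m ≥ 1`. -/
noncomputable def fmax {m : ℕ} (hm : 1 ≤ m) (α : Fin m → ℝ) : ℝ :=
  Finset.univ.sup' (Finset.univ_nonempty_iff.mpr ⟨⟨0, hm⟩⟩) α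

theorem fmin_add_fmax {m : ℕ} (hm : 1 ≤ m) (α : Fin m → ℝ) :
    fmin hm α + fmax hm (fun t => ∑ i ∈ Finset.univ.erase t, α i) = ∑ i, α i := by
  have he : ∀ t, ∑ i ∈ Finset.univ.erase t, α i = ∑ i, α i - α t := fun t => by
    rw [← Finset.sum_erase_add _ _ (Finset.mem_univ t)]; ring
  simp only [he]
  unfold fmin fmax
  apply le_antisymm
  · have : Finset.univ.sup' (Finset.univ_nonempty_iff.mpr ⟨⟨0, hm⟩⟩)
        (fun t => ∑ i, α i - α t) ≤
        ∑ i, α i - Finset.univ.inf' (Finset.univ_nonempty_iff.mpr ⟨⟨0, hm⟩⟩) α := by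
      apply Finset.sup'_le
      intro t ht
      have := Finset.inf'_le α ht
      linarith
    linarith
  · obtain ⟨t, ht, h⟩ := Finset.exists_mem_eq_inf' (Finset.univ_nonempty_iff.mpr ⟨⟨0, hm⟩⟩) α
    rw [h]
    have := Finset.le_sup' (fun t => ∑ i, α i - α t) ht
    linarith

theorem suppF_bounds {n : ℕ} (F : Set (EuclideanSpace ℝ (Fin n)))
    (hF : F.Nonempty) (hFc : IsClosed F) (hFb : Bornology.IsBounded F)
    (μ : ℝ) (hμ : 0 < μ) (x : EuclideanSpace ℝ (Fin n)) :
    μ / 2 * (‖μ⁻¹ • x‖ ^ 2 - (Metric.infDist (μ⁻¹ • x) F) ^ 2) ≤ suppF F x ∧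
    suppF F x ≤ μ / 2 * (‖μ⁻¹ • x‖ ^ 2 - (Metric.infDist (μ⁻¹ • x) F) ^ 2)
      + μ / 2 * (sSup (norm '' F)) ^ 2 := by
  have hcomp : IsCompact F := Metric.isCompact_of_isClosed_isBounded hFc hFb
  have hbd : BddAbove ((fun y => ⟪x, y⟫) '' F) :=
    (hcomp.image (by fun_prop)).bddAbove
  have hbn : BddAbove (norm '' F) := (hcomp.image continuous_norm).bddAbove
  have key : ∀ q : EuclideanSpace ℝ (Fin n),
      ⟪x, q⟫ = μ / 2 * (‖μ⁻¹ • x‖ ^ 2 + ‖q‖ ^ 2 - ‖μ⁻¹ • x - q‖ ^ 2) := by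
    intro q
    rw [norm_sub_sq_real, real_inner_smul_left]
    field_simp
    ring
  constructor
  · obtain ⟨q, hq, h⟩ := hcomp.exists_infDist_eq_dist hF (μ⁻¹ • x)
    have h1 : ⟪x, q⟫ ≤ suppF F x := le_csSup hbd ⟨q, hq, rfl⟩
    rw [key q] at h1
    rw [h, dist_eq_norm]
    have : 0 ≤ μ / 2 * ‖q‖ ^ 2 := by positivity
    linarith
  · apply csSup_le (hF.image _)
    rintro _ ⟨q, hq, rfl⟩
    simp only [key q]
    have h1 : Metric.infDist (μ⁻¹ • x) F ≤ ‖μ⁻¹ • x - q‖ := by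
      rw [← dist_eq_norm]; exact Metric.infDist_le_dist_of_mem hq
    have h2 : ‖q‖ ≤ sSup (norm '' F) := le_csSup hbn ⟨q, hq, rfl⟩
    have h3 := pow_le_pow_left₀ Metric.infDist_nonneg h1 2
    have h4 := pow_le_pow_left₀ (norm_nonneg q) h2 2
    rw [← mul_add]
    apply mul_le_mul_of_nonneg_left _ (by positivity)
    linarith

theorem stmt_7 {n m k : ℕ} (hm : 1 ≤ m) (hk : 1 ≤ k)
    (a : Fin m → EuclideanSpace ℝ (Fin n))
    (F : Set (EuclideanSpace ℝ (Fin n)))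
    (hF : F.Nonempty) (hFc : IsClosed F) (hFb : Bornology.IsBounded F)
    (hFconv : Convex ℝ F) (hF0 : (0 : EuclideanSpace ℝ (Fin n)) ∈ interior F)
    (lam μ : ℝ) (hlam : 0 < lam) (hμ : 0 < μ)
    (X : Fin k → EuclideanSpace ℝ (Fin n)) :
    (((2 + lam) * μ / 2) * ∑ i, ∑ ℓ, ‖μ⁻¹ • (X ℓ - a i)‖ ^ 2
        - ((2 + lam) * μ / 2) * ∑ i, ∑ ℓ, (Metric.infDist (μ⁻¹ • (X ℓ - a i)) F) ^ 2
        - ∑ i, fmax hk (fun t => ∑ ℓ ∈ Finset.univ.erase t, suppF F (X ℓ - a i))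
        - lam * ∑ ℓ, fmax hm (fun t => ∑ i ∈ Finset.univ.erase t, suppF F (X ℓ - a i))
        - fmax hm (fun t => ∑ i ∈ Finset.univ.erase t, ∑ ℓ, suppF F (X ℓ - a i)))
      ≤ (∑ i, fmin hk (fun ℓ => suppF F (X ℓ - a i))
          + fmin hm (fun i => ∑ ℓ, suppF F (X ℓ - a i))
          + lam * ∑ ℓ, fmin hm (fun i => suppF F (X ℓ - a i)))
    ∧ (∑ i, fmin hk (fun ℓ => suppF F (X ℓ - a i))
          + fmin hm (fun i => ∑ ℓ, suppF F (X ℓ - a i))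
          + lam * ∑ ℓ, fmin hm (fun i => suppF F (X ℓ - a i)))
      ≤ (((2 + lam) * μ / 2) * ∑ i, ∑ ℓ, ‖μ⁻¹ • (X ℓ - a i)‖ ^ 2
          - ((2 + lam) * μ / 2) * ∑ i, ∑ ℓ, (Metric.infDist (μ⁻¹ • (X ℓ - a i)) F) ^ 2
          - ∑ i, fmax hk (fun t => ∑ ℓ ∈ Finset.univ.erase t, suppF F (X ℓ - a i))
          - lam * ∑ ℓ, fmax hm (fun t => ∑ i ∈ Finset.univ.erase t, suppF F (X ℓ - a i))
          - fmax hm (fun t => ∑ i ∈ Finset.univ.erase t, ∑ ℓ, suppF F (X ℓ - a i)))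
        + (m : ℝ) * (k : ℝ) * (1 + lam / 2) * μ * (sSup (norm '' F)) ^ 2 := by
  have e1 : ∑ i, fmin hk (fun ℓ => suppF F (X ℓ - a i))
      + ∑ i, fmax hk (fun t => ∑ ℓ ∈ Finset.univ.erase t, suppF F (X ℓ - a i))
      = ∑ i, ∑ ℓ, suppF F (X ℓ - a i) := by
    rw [← Finset.sum_add_distrib]
    exact Finset.sum_congr rfl fun i _ => fmin_add_fmax hk (fun ℓ => suppF F (X ℓ - a i))
  have e2 : ∑ ℓ, fmin hm (fun i => suppF F (X ℓ - a i))
      + ∑ ℓ, fmax hm (fun t => ∑ i ∈ Finset.univ.erase t, suppF F (X ℓ - a i))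
      = ∑ i, ∑ ℓ, suppF F (X ℓ - a i) := by
    rw [← Finset.sum_add_distrib, Finset.sum_comm]
    exact Finset.sum_congr rfl fun ℓ _ => fmin_add_fmax hm (fun i => suppF F (X ℓ - a i))
  have e3 := fmin_add_fmax hm (fun i => ∑ ℓ, suppF F (X ℓ - a i))
  have b := fun i ℓ => suppF_bounds F hF hFc hFb μ hμ (X ℓ - a i)
  have b1 := Finset.sum_le_sum fun i (_ : i ∈ Finset.univ) =>
    Finset.sum_le_sum fun ℓ (_ : ℓ ∈ Finset.univ) => (b i ℓ).1
  have b2 := Finset.sum_le_sum fun i (_ : i ∈ Finset.univ) =>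
    Finset.sum_le_sum fun ℓ (_ : ℓ ∈ Finset.univ) => (b i ℓ).2
  simp only [Finset.sum_add_distrib, ← Finset.mul_sum, Finset.sum_sub_distrib,
    Finset.sum_const, Finset.card_univ, Fintype.card_fin, nsmul_eq_mul] at b1 b2
  have hl : 0 ≤ 2 + lam := by linarith
  have c1 := mul_le_mul_of_nonneg_left b1 hl
  have c2 := mul_le_mul_of_nonneg_left b2 hl
  have e2' := congrArg (lam * ·) e2
  simp only [mul_add] at e2'
  constructor
  · linear_combination c1 - e1 - e2' - e3
  · linear_combination c2 + e1 + e2' + e3
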